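/- Let (Ω, P) be a probability space, k ≥ 1 a natural number, E a finite set partitioned into k sets E_1, …, E_k, and let (X_e)_{e ∈ E} be mutually independent, integrable, everywhere-nonnegative real random variables. Let p be a real number with 0 < p, p^k + p = 1, and let t be a real number such that for every agent index i, P(X_e < t for all e ∈ E_i) = p. Define the adversarial value Z of the fully-symmetric threshold mechanism with threshold t by: Z(ω) = max over those i for which the set A_i(ω) = {e ∈ E_i : X_e(ω) ≥ t} is nonempty of min_{e ∈ A_i(ω)} X_e(ω), and Z(ω) = 0 if A_i(ω) is empty for every i. Then E[Z] ≥ p · E[max_{e ∈ E} X_e]. -/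

import Mathlib

open MeasureTheory ProbabilityTheory

/-!
By the layer-cake formula it is enough to compare tails: `p * P(max X > s) ≤ P(Z > s)` for `s > 0`.

If `s < t`, then `Z > s` as soon as some agent has an acceptable element, and this happens with
probability `1 - p ^ k = p`.

If `t ≤ s`, fix an agent `i`. For each `e` in `E_i`, consider the event that `X e > s` while all
other elements of `i` are below `t`. These events are disjoint, each has probability at least
`p * P(X e > s)`, and each forces the proposal of `i` to exceed `s`. So `i` proposes more than `s`
with probability at least `p * P(i has an element > s)`. The agents being independent, this
per-agent bound passes to the union over the agents.
-/

section Products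

lemma prod_one_sub_add_mul_le {α : Type*} (s : Finset α) {p : ℝ} (hp0 : 0 ≤ p) (hp1 : p ≤ 1)
    {c : α → ℝ} (hc0 : ∀ i ∈ s, 0 ≤ c i) (hc1 : ∀ i ∈ s, c i ≤ 1) :
    ∏ i ∈ s, (1 - p + p * c i) ≤ 1 - p + p * ∏ i ∈ s, c i := by
  classical
  induction s using Finset.induction_on with
  | empty => simp
  | insert a s ha ih =>
    rw [Finset.forall_mem_insert] at hc0 hc1
    rw [Finset.prod_insert ha, Finset.prod_insert ha]
    set C := ∏ i ∈ s, c i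
    have hC : C ≤ 1 := Finset.prod_le_one hc0.2 hc1.2
    have hfactor : 0 ≤ 1 - p + p * c a :=
      add_nonneg (sub_nonneg.2 hp1) (mul_nonneg hp0 hc0.1)
    have hgap : 0 ≤ p * (1 - p) * ((1 - c a) * (1 - C)) :=
      mul_nonneg (mul_nonneg hp0 (sub_nonneg.2 hp1))
        (mul_nonneg (sub_nonneg.2 hc1.1) (sub_nonneg.2 hC))
    calc (1 - p + p * c a) * ∏ i ∈ s, (1 - p + p * c i)
        ≤ (1 - p + p * c a) * (1 - p + p * C) :=
          mul_le_mul_of_nonneg_left (ih hc0.2 hc1.2) hfactor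
      _ = 1 - p + p * (c a * C) - p * (1 - p) * ((1 - c a) * (1 - C)) := by ring
      _ ≤ 1 - p + p * (c a * C) := sub_le_self _ hgap

lemma mul_one_sub_prod_one_sub_le {α : Type*} (s : Finset α) {p : ℝ} (hp0 : 0 ≤ p) (hp1 : p ≤ 1)
    {b g : α → ℝ} (hb0 : ∀ i ∈ s, 0 ≤ b i) (hb1 : ∀ i ∈ s, b i ≤ 1)
    (hg1 : ∀ i ∈ s, g i ≤ 1) (hbg : ∀ i ∈ s, p * b i ≤ g i) :
    p * (1 - ∏ i ∈ s, (1 - b i)) ≤ 1 - ∏ i ∈ s, (1 - g i) := by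
  have hprod : ∏ i ∈ s, (1 - g i) ≤ 1 - p + p * ∏ i ∈ s, (1 - b i) :=
    calc ∏ i ∈ s, (1 - g i) ≤ ∏ i ∈ s, (1 - p + p * (1 - b i)) :=
          Finset.prod_le_prod (fun i hi ↦ sub_nonneg.2 (hg1 i hi))
            fun i hi ↦ by linarith [hbg i hi]
      _ ≤ 1 - p + p * ∏ i ∈ s, (1 - b i) :=
          prod_one_sub_add_mul_le s hp0 hp1 (fun i hi ↦ sub_nonneg.2 (hb1 i hi))
            fun i hi ↦ sub_le_self _ (hb0 i hi)
  linarith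

end Products

section TailComparison

variable {Ω : Type*} [MeasurableSpace Ω] {μ : Measure Ω}

lemma mul_integral_le_integral_of_mul_measureReal_lt_le [IsFiniteMeasure μ] {f g : Ω → ℝ} {p : ℝ}
    (hp : 0 ≤ p) (hf : 0 ≤ᵐ[μ] f) (hfm : AEMeasurable f μ) (hg : 0 ≤ᵐ[μ] g)
    (hgi : Integrable g μ)
    (htail : ∀ s, 0 < s → p * μ.real {ω | s < f ω} ≤ μ.real {ω | s < g ω}) :
    p * ∫ ω, f ω ∂μ ≤ ∫ ω, g ω ∂μ := by
  have hlintegral : ENNReal.ofReal p * ∫⁻ ω, ENNReal.ofReal (f ω) ∂μ ≤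
      ∫⁻ ω, ENNReal.ofReal (g ω) ∂μ := by
    rw [lintegral_eq_lintegral_meas_lt μ hf hfm,
      lintegral_eq_lintegral_meas_lt μ hg hgi.aemeasurable,
      ← lintegral_const_mul' _ _ ENNReal.ofReal_ne_top]
    refine setLIntegral_mono' measurableSet_Ioi fun s hs ↦ ?_
    rw [← ofReal_measureReal, ← ofReal_measureReal, ← ENNReal.ofReal_mul hp]
    exact ENNReal.ofReal_le_ofReal (htail s hs)
  rw [integral_eq_lintegral_of_nonneg_ae hf hfm.aestronglyMeasurable,
    integral_eq_lintegral_of_nonneg_ae hg hgi.aestronglyMeasurable]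
  simpa only [ENNReal.toReal_mul, ENNReal.toReal_ofReal hp] using
    ENNReal.toReal_mono hgi.lintegral_lt_top.ne hlintegral

end TailComparison

section Independence

variable {Ω ι κ : Type*} {mΩ : MeasurableSpace Ω} {μ : Measure Ω}

lemma iIndep_iSup_preimage_singleton [IsProbabilityMeasure μ] {m : ι → MeasurableSpace Ω}
    (hm : ∀ e, m e ≤ mΩ) (hindep : iIndep m μ) (a : ι → κ) :
    iIndep (fun i ↦ ⨆ e ∈ a ⁻¹' {i}, m e) μ := by
  classical
  refine (iIndep_iff _ _).2 fun s A hA ↦ ?_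
  induction s using Finset.induction_on with
  | empty => simp
  | insert i s hi ih =>
    rw [Finset.prod_insert hi, ← ih fun j hj ↦ hA j (Finset.mem_insert_of_mem hj),
      Finset.set_biInter_insert]
    have hdisj : Disjoint (a ⁻¹' {i}) (a ⁻¹' s) :=
      Disjoint.preimage a (Set.disjoint_singleton_left.2 hi)
    refine (Indep_iff _ _ _).1 (indep_iSup_of_disjoint hm hindep hdisj) _ _
      (hA i (Finset.mem_insert_self i s)) (Finset.measurableSet_biInter s fun j hj ↦ ?_)
    have hle : ⨆ e ∈ a ⁻¹' {j}, m e ≤ ⨆ e ∈ a ⁻¹' (s : Set κ), m e :=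
      biSup_mono fun e he ↦ Set.mem_preimage.2 (he ▸ hj)
    exact hle _ (hA j (Finset.mem_insert_of_mem hj))

variable {β : ι → Type*} [∀ e, MeasurableSpace (β e)]

lemma iIndepFun_preimage_singleton {f : ∀ e, Ω → β e} (hf : ∀ e, Measurable (f e))
    (hindep : iIndepFun f μ) (a : ι → κ) :
    iIndepFun (fun i ω (e : a ⁻¹' {i}) ↦ f e ω) μ := by
  have := hindep.isProbabilityMeasure
  rw [iIndepFun_iff_iIndep]
  convert! iIndep_iSup_preimage_singleton (fun e ↦ (hf e).comap_le) hindep.iIndep a using 2 with i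
  simp only [MeasurableSpace.pi, MeasurableSpace.comap_iSup, MeasurableSpace.comap_comp,
    iSup_subtype]
  rfl

lemma iIndepFun_preimage_singleton₀ [Countable ι] {f : ∀ e, Ω → β e}
    (hf : ∀ e, AEMeasurable (f e) μ) (hindep : iIndepFun f μ) (a : ι → κ) :
    iIndepFun (fun i ω (e : a ⁻¹' {i}) ↦ f e ω) μ := by
  have hmk : iIndepFun (fun e ↦ (hf e).mk (f e)) μ :=
    (iIndepFun_congr fun e ↦ (hf e).ae_eq_mk).1 hindep
  refine (iIndepFun_congr fun i ↦ ?_).2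
    (iIndepFun_preimage_singleton (fun e ↦ (hf e).measurable_mk) hmk a)
  filter_upwards [ae_all_iff.2 fun e ↦ (hf e).ae_eq_mk] with ω hω
  exact funext fun e ↦ hω e

variable {f : ∀ e, Ω → β e} {S T : ∀ e, Set (β e)}

lemma measureReal_iInter_preimage_eq_prod [Fintype ι] (hindep : iIndepFun f μ)
    (hS : ∀ e, MeasurableSet (S e)) :
    μ.real (⋂ e, f e ⁻¹' S e) = ∏ e, μ.real (f e ⁻¹' S e) := by
  simp only [measureReal_def, hindep.meas_iInter fun e ↦ ⟨S e, hS e, rfl⟩, ENNReal.toReal_prod]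

lemma measureReal_iUnion_preimage_eq_one_sub_prod [Fintype ι]
    (hf : ∀ e, AEMeasurable (f e) μ) (hindep : iIndepFun f μ) (hS : ∀ e, MeasurableSet (S e)) :
    μ.real (⋃ e, f e ⁻¹' S e) = 1 - ∏ e, (1 - μ.real (f e ⁻¹' S e)) := by
  have := hindep.isProbabilityMeasure
  have hnull : ∀ e, NullMeasurableSet (f e ⁻¹' S e) μ := fun e ↦
    (hf e).nullMeasurableSet_preimage (hS e)
  have hcompl : 1 - μ.real (⋃ e, f e ⁻¹' S e) = ∏ e, (1 - μ.real (f e ⁻¹' S e)) := by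
    simp only [← probReal_compl_eq_one_sub₀ (hnull _),
      ← probReal_compl_eq_one_sub₀ (NullMeasurableSet.iUnion hnull), Set.compl_iUnion,
      ← Set.preimage_compl]
    exact measureReal_iInter_preimage_eq_prod hindep fun e ↦ (hS e).compl
  linarith

lemma mul_measureReal_iUnion_preimage_le [Finite ι] (hf : ∀ e, AEMeasurable (f e) μ)
    (hindep : iIndepFun f μ) (hS : ∀ e, MeasurableSet (S e)) (hT : ∀ e, MeasurableSet (T e))
    {p : ℝ} (hp0 : 0 ≤ p) (hp1 : p ≤ 1)
    (hST : ∀ e, p * μ.real (f e ⁻¹' S e) ≤ μ.real (f e ⁻¹' T e)) :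
    p * μ.real (⋃ e, f e ⁻¹' S e) ≤ μ.real (⋃ e, f e ⁻¹' T e) := by
  have := Fintype.ofFinite ι
  have := hindep.isProbabilityMeasure
  rw [measureReal_iUnion_preimage_eq_one_sub_prod hf hindep hS,
    measureReal_iUnion_preimage_eq_one_sub_prod hf hindep hT]
  exact mul_one_sub_prod_one_sub_le _ hp0 hp1 (fun _ _ ↦ measureReal_nonneg)
    (fun _ _ ↦ measureReal_le_one) (fun _ _ ↦ measureReal_le_one) fun e _ ↦ hST e

lemma measureReal_iInter_preimage_mul_le_update [Finite ι] [DecidableEq ι]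
    (hindep : iIndepFun f μ) (hS : ∀ e, MeasurableSet (S e)) (a : ι) {A : Set (β a)}
    (hA : MeasurableSet A) :
    μ.real (⋂ e, f e ⁻¹' S e) * μ.real (f a ⁻¹' A) ≤
      μ.real (⋂ e, f e ⁻¹' Function.update S a A e) := by
  have := Fintype.ofFinite ι
  have := hindep.isProbabilityMeasure
  have hupdate : ∀ e, MeasurableSet (Function.update S a A e) :=
    (Function.forall_update_iff S fun _ s ↦ MeasurableSet s).2 ⟨hA, fun e _ ↦ hS e⟩
  rw [measureReal_iInter_preimage_eq_prod hindep hupdate]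
  simp only [Function.apply_update (fun e s ↦ μ.real (f e ⁻¹' s))]
  rw [measureReal_iInter_preimage_eq_prod hindep hS,
    Finset.prod_update_of_mem (Finset.mem_univ a), mul_comm,
    ← Finset.prod_sdiff (Finset.subset_univ {a}), Finset.prod_singleton]
  refine mul_le_mul_of_nonneg_left ?_ measureReal_nonneg
  exact mul_le_of_le_one_right (Finset.prod_nonneg fun _ _ ↦ measureReal_nonneg)
    measureReal_le_one

end Independence

section SingleAgent

/-- The value profiles `y` for which an agent holding elements of values `y` makes a proposal under
the threshold `t`, and every proposal open to the agent is worth more than `s`. -/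
def proposalGT {α : Type*} (t s : ℝ) : Set (α → ℝ) :=
  {y | (∃ e, t ≤ y e) ∧ ∀ e, t ≤ y e → s < y e}

lemma proposalGT_of_lt {α : Type*} {t s : ℝ} (hst : s < t) :
    (proposalGT t s : Set (α → ℝ)) = {y | ∀ e, y e < t}ᶜ := by
  ext y
  simp only [proposalGT, Set.mem_ofPred_eq, Set.mem_compl_iff, not_forall, not_lt]
  exact and_iff_left fun e he ↦ hst.trans_le he

lemma measurableSet_proposalGT {α : Type*} [Countable α] (t s : ℝ) :
    MeasurableSet (proposalGT t s : Set (α → ℝ)) := by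
  unfold proposalGT
  measurability

variable {Ω α : Type*} [MeasurableSpace Ω] {μ : Measure Ω}

lemma measureReal_forall_lt_mul_exists_gt_le_proposalGT [Finite α] {Y : α → Ω → ℝ}
    (hY : ∀ e, AEMeasurable (Y e) μ) (hindep : iIndepFun Y μ) {t s : ℝ} (hts : t ≤ s) :
    μ.real {ω | ∀ e, Y e ω < t} * μ.real {ω | ∃ e, s < Y e ω} ≤
      μ.real {ω | (fun e ↦ Y e ω) ∈ proposalGT t s} := by
  classical
  have := Fintype.ofFinite α
  have := hindep.isProbabilityMeasure
  let onlyAbove (e : α) : Set Ω :=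
    ⋂ e', Y e' ⁻¹' Function.update (fun _ ↦ Set.Iio t) e (Set.Ioi s) e'
  have mem_onlyAbove {e : α} {ω : Ω} :
      ω ∈ onlyAbove e ↔ s < Y e ω ∧ ∀ e' ≠ e, Y e' ω < t := by
    simp only [onlyAbove, Set.mem_iInter, Set.mem_preimage]
    exact Function.forall_update_iff _ fun e' A ↦ Y e' ω ∈ A
  have hnull (e : α) : NullMeasurableSet (onlyAbove e) μ := by
    refine NullMeasurableSet.iInter fun e' ↦ (hY e').nullMeasurableSet_preimage ?_
    rcases eq_or_ne e' e with rfl | hne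
    · simp
    · simp [hne]
  have hdisj : Pairwise (Function.onFun Disjoint onlyAbove) := fun e e' hne ↦
    Set.disjoint_left.2 fun ω he he' ↦ hts.not_gt <|
      (mem_onlyAbove.1 he).1.trans ((mem_onlyAbove.1 he').2 e hne)
  have hsub : ⋃ e, onlyAbove e ⊆ {ω | (fun e ↦ Y e ω) ∈ proposalGT t s} := by
    refine Set.iUnion_subset fun e ω hω ↦ ?_
    obtain ⟨hgt, hlt⟩ := mem_onlyAbove.1 hω
    refine ⟨⟨e, hts.trans hgt.le⟩, fun e' he' ↦ ?_⟩
    have : e' = e := by_contra fun hne ↦ (hlt e' hne).not_ge he'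
    exact this ▸ hgt
  have hforall : {ω | ∀ e, Y e ω < t} = ⋂ e, Y e ⁻¹' Set.Iio t := Set.ofPred_forall _
  have hexists : {ω | ∃ e, s < Y e ω} = ⋃ e, Y e ⁻¹' Set.Ioi s := Set.ofPred_exists _
  calc μ.real {ω | ∀ e, Y e ω < t} * μ.real {ω | ∃ e, s < Y e ω}
      ≤ μ.real {ω | ∀ e, Y e ω < t} * ∑ e, μ.real (Y e ⁻¹' Set.Ioi s) := by
        rw [hexists]
        exact mul_le_mul_of_nonneg_left (measureReal_iUnion_fintype_le _) measureReal_nonneg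
    _ ≤ ∑ e, μ.real (onlyAbove e) := by
        rw [Finset.mul_sum, hforall]
        exact Finset.sum_le_sum fun e _ ↦ measureReal_iInter_preimage_mul_le_update hindep
          (fun _ ↦ measurableSet_Iio) e measurableSet_Ioi
    _ = μ.real (⋃ e, onlyAbove e) := by
        simpa using (measureReal_biUnion_finset₀ (s := Finset.univ)
          (fun e _ e' _ hne ↦ (hdisj hne).aedisjoint) fun e _ ↦ hnull e).symm
    _ ≤ _ := measureReal_mono hsub

end SingleAgent

section Mechanism

variable {ι κ : Type*}

/-- The principal's value under the threshold mechanism with threshold `t` against adversarial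
agents, when element `e` belongs to `agent e` and has value `x e`: the largest of the agents'
least-valuable acceptable elements. It is `0` when no element is acceptable, since `sSup ∅ = 0`. -/
noncomputable def adversarialValue (agent : ι → κ) (t : ℝ) (x : ι → ℝ) : ℝ :=
  sSup {v | ∃ i, (∃ e, agent e = i ∧ t ≤ x e) ∧
    v = sInf {y | ∃ e, agent e = i ∧ t ≤ x e ∧ y = x e}}

lemma finite_acceptable_values [Finite ι] (agent : ι → κ) (t : ℝ) (x : ι → ℝ) (i : κ) :
    {y | ∃ e, agent e = i ∧ t ≤ x e ∧ y = x e}.Finite :=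
  (Set.finite_range x).subset fun _ ⟨e, _, _, hy⟩ ↦ ⟨e, hy.symm⟩

lemma finite_proposed_values [Finite ι] (agent : ι → κ) (t : ℝ) (x : ι → ℝ) :
    {v | ∃ i, (∃ e, agent e = i ∧ t ≤ x e) ∧
      v = sInf {y | ∃ e, agent e = i ∧ t ≤ x e ∧ y = x e}}.Finite := by
  refine (Set.finite_range fun a ↦
    sInf {y | ∃ e, agent e = agent a ∧ t ≤ x e ∧ y = x e}).subset ?_
  rintro _ ⟨_, ⟨a, rfl, _⟩, rfl⟩
  exact ⟨a, rfl⟩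

lemma lt_sInf_acceptable_values_iff [Finite ι] {agent : ι → κ} {t s : ℝ} {x : ι → ℝ} {i : κ}
    (hi : ∃ e, agent e = i ∧ t ≤ x e) :
    s < sInf {y | ∃ e, agent e = i ∧ t ≤ x e ∧ y = x e} ↔
      (fun e : agent ⁻¹' {i} ↦ x e) ∈ proposalGT t s := by
  have hne : {y | ∃ e, agent e = i ∧ t ≤ x e ∧ y = x e}.Nonempty :=
    let ⟨e, he, hte⟩ := hi; ⟨x e, e, he, hte, rfl⟩
  rw [(finite_acceptable_values agent t x i).lt_csInf_iff hne]
  simp only [proposalGT, Set.mem_ofPred_eq, Subtype.exists, Subtype.forall, Set.mem_preimage,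
    Set.mem_singleton_iff, exists_prop, hi, true_and]
  grind

lemma lt_adversarialValue_iff [Finite ι] {agent : ι → κ} {t s : ℝ} {x : ι → ℝ} :
    s < adversarialValue agent t x ↔
      (∃ i, (fun e : agent ⁻¹' {i} ↦ x e) ∈ proposalGT t s) ∨ s < 0 ∧ ∀ e, x e < t := by
  have exists_of_mem {i : κ} (hi : (fun e : agent ⁻¹' {i} ↦ x e) ∈ proposalGT t s) :
      ∃ e, agent e = i ∧ t ≤ x e := let ⟨e, he⟩ := hi.1; ⟨e, e.2, he⟩
  by_cases hx : ∀ e, x e < t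
  · have hempty : ∀ i, ¬∃ e, agent e = i ∧ t ≤ x e := fun i ⟨e, _, he⟩ ↦ (hx e).not_ge he
    have hzero : adversarialValue agent t x = 0 := by
      simp only [adversarialValue, hempty, false_and, exists_false, Set.ofPred_false,
        Real.sSup_empty]
    rw [hzero, or_iff_right fun ⟨i, hi⟩ ↦ hempty i (exists_of_mem hi), and_iff_left hx]
  · obtain ⟨a, ha⟩ := not_forall.1 hx
    rw [adversarialValue, lt_csSup_iff (finite_proposed_values agent t x).bddAbove
      ⟨_, agent a, ⟨a, rfl, not_lt.1 ha⟩, rfl⟩, or_iff_left fun h ↦ hx h.2]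
    constructor
    · rintro ⟨_, ⟨i, hi, rfl⟩, hs⟩
      exact ⟨i, (lt_sInf_acceptable_values_iff hi).1 hs⟩
    · rintro ⟨i, hmem⟩
      have hi := exists_of_mem hmem
      exact ⟨_, ⟨i, hi, rfl⟩, (lt_sInf_acceptable_values_iff hi).2 hmem⟩

lemma measurable_adversarialValue [Finite ι] [Countable κ] (agent : ι → κ) (t : ℝ) :
    Measurable (adversarialValue agent t) := by
  refine measurable_of_Ioi fun s ↦ ?_
  simp only [Set.preimage, Set.mem_Ioi, lt_adversarialValue_iff]
  have hblock (i : κ) : Measurable fun (x : ι → ℝ) (e : agent ⁻¹' {i}) ↦ x e := by fun_prop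
  have hproposal : MeasurableSet
      {x : ι → ℝ | ∃ i, (fun e : agent ⁻¹' {i} ↦ x e) ∈ proposalGT t s} := by
    rw [Set.ofPred_exists]
    exact .iUnion fun i ↦ hblock i (measurableSet_proposalGT t s)
  have hnone : MeasurableSet {x : ι → ℝ | s < 0 ∧ ∀ e, x e < t} := by measurability
  exact hproposal.union hnone

lemma adversarialValue_nonneg {agent : ι → κ} {t : ℝ} {x : ι → ℝ} (hx : 0 ≤ x) :
    0 ≤ adversarialValue agent t x := by
  refine Real.sSup_nonneg ?_
  rintro _ ⟨_, _, rfl⟩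
  refine Real.sInf_nonneg ?_
  rintro _ ⟨e, _, _, rfl⟩
  exact hx e

lemma adversarialValue_le_sum [Fintype ι] {agent : ι → κ} {t : ℝ} {x : ι → ℝ} (hx : 0 ≤ x) :
    adversarialValue agent t x ≤ ∑ e, x e := by
  refine Real.sSup_le ?_ (Finset.sum_nonneg fun e _ ↦ hx e)
  rintro _ ⟨i, ⟨e, he, hte⟩, rfl⟩
  exact (csInf_le (finite_acceptable_values agent t x i).bddBelow ⟨e, he, hte, rfl⟩).trans
    (Finset.single_le_sum (fun e _ ↦ hx e) (Finset.mem_univ e))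

lemma lt_iSup_iff_exists_of_nonneg [Finite ι] {x : ι → ℝ} {s : ℝ} (hs : 0 ≤ s) :
    s < ⨆ e, x e ↔ ∃ e, s < x e := by
  cases isEmpty_or_nonempty ι
  · simpa using hs
  · exact lt_ciSup_iff (Set.finite_range x).bddAbove

variable {Ω : Type*} [MeasurableSpace Ω] {μ : Measure Ω}

lemma integrable_adversarialValue [Finite ι] [Countable κ] {X : ι → Ω → ℝ}
    (hint : ∀ e, Integrable (X e) μ) (hnonneg : ∀ᵐ ω ∂μ, ∀ e, 0 ≤ X e ω) (agent : ι → κ) (t : ℝ) :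
    Integrable (fun ω ↦ adversarialValue agent t fun e ↦ X e ω) μ := by
  have := Fintype.ofFinite ι
  refine (integrable_finsetSum Finset.univ fun e _ ↦ hint e).mono' ?_ ?_
  · exact ((measurable_adversarialValue agent t).comp_aemeasurable
      (aemeasurable_pi_lambda _ fun e ↦ (hint e).aemeasurable)).aestronglyMeasurable
  · filter_upwards [hnonneg] with ω hω
    rw [Real.norm_of_nonneg (adversarialValue_nonneg hω)]
    exact adversarialValue_le_sum hω

lemma mul_measureReal_exists_gt_le_of_lt [Finite ι] [Fintype κ] {agent : ι → κ} {X : ι → Ω → ℝ}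
    (hX : ∀ e, AEMeasurable (X e) μ) (hindep : iIndepFun X μ) {p t s : ℝ} (hp : 0 ≤ p)
    (hprod : p + ∏ i, μ.real {ω | ∀ e, agent e = i → X e ω < t} ≤ 1) (hst : s < t) :
    p * μ.real {ω | ∃ e, s < X e ω} ≤
      μ.real {ω | ∃ i, (fun e : agent ⁻¹' {i} ↦ X e ω) ∈ proposalGT t s} := by
  have := hindep.isProbabilityMeasure
  let block (i : κ) (ω : Ω) (e : agent ⁻¹' {i}) : ℝ := X e ω
  have hblock (i : κ) : AEMeasurable (block i) μ := aemeasurable_pi_lambda _ fun e ↦ hX e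
  have hcompl (i : κ) : 1 - μ.real (block i ⁻¹' proposalGT t s) =
      μ.real {ω | ∀ e, agent e = i → X e ω < t} := by
    rw [← probReal_compl_eq_one_sub₀
      ((hblock i).nullMeasurableSet_preimage (measurableSet_proposalGT t s)),
      proposalGT_of_lt hst, Set.preimage_compl, compl_compl]
    congr 1
    ext ω
    simp [block]
  calc p * μ.real {ω | ∃ e, s < X e ω}
      ≤ p := mul_le_of_le_one_right hp measureReal_le_one
    _ ≤ 1 - ∏ i, (1 - μ.real (block i ⁻¹' proposalGT t s)) := by
        simp only [hcompl]
        linarith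
    _ = μ.real (⋃ i, block i ⁻¹' proposalGT t s) :=
        (measureReal_iUnion_preimage_eq_one_sub_prod hblock
          (iIndepFun_preimage_singleton₀ hX hindep agent)
          fun _ ↦ measurableSet_proposalGT t s).symm
    _ = _ := by rw [Set.ofPred_exists]; rfl

lemma mul_measureReal_exists_gt_le_of_ge [Finite ι] [Finite κ] {agent : ι → κ} {X : ι → Ω → ℝ}
    (hX : ∀ e, AEMeasurable (X e) μ) (hindep : iIndepFun X μ) {p t s : ℝ} (hp0 : 0 ≤ p)
    (hp1 : p ≤ 1) (hagent : ∀ i, p ≤ μ.real {ω | ∀ e, agent e = i → X e ω < t}) (hts : t ≤ s) :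
    p * μ.real {ω | ∃ e, s < X e ω} ≤
      μ.real {ω | ∃ i, (fun e : agent ⁻¹' {i} ↦ X e ω) ∈ proposalGT t s} := by
  let block (i : κ) (ω : Ω) (e : agent ⁻¹' {i}) : ℝ := X e ω
  have hindep_block (i : κ) : iIndepFun (fun (e : agent ⁻¹' {i}) ω ↦ block i ω e) μ :=
    hindep.precomp (g := ((↑) : agent ⁻¹' {i} → ι)) Subtype.val_injective
  have hsingle (i : κ) : p * μ.real (block i ⁻¹' {y | ∃ e, s < y e}) ≤
      μ.real (block i ⁻¹' proposalGT t s) :=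
    calc p * μ.real (block i ⁻¹' {y | ∃ e, s < y e})
        ≤ μ.real {ω | ∀ e, block i ω e < t} * μ.real (block i ⁻¹' {y | ∃ e, s < y e}) := by
          refine mul_le_mul_of_nonneg_right ?_ measureReal_nonneg
          simpa [block] using hagent i
      _ ≤ μ.real (block i ⁻¹' proposalGT t s) :=
          measureReal_forall_lt_mul_exists_gt_le_proposalGT
            (Y := fun (e : agent ⁻¹' {i}) ω ↦ block i ω e) (fun e ↦ hX e) (hindep_block i) hts
  have hexists : {ω | ∃ e, s < X e ω} = ⋃ i, block i ⁻¹' {y | ∃ e, s < y e} := by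
    ext ω
    simp [block]
  have hproposal : {ω | ∃ i, (fun e : agent ⁻¹' {i} ↦ X e ω) ∈ proposalGT t s} =
      ⋃ i, block i ⁻¹' proposalGT t s := Set.ofPred_exists _
  rw [hexists, hproposal]
  exact mul_measureReal_iUnion_preimage_le (f := block)
    (fun i ↦ aemeasurable_pi_lambda _ fun e ↦ hX e)
    (iIndepFun_preimage_singleton₀ hX hindep agent) (fun _ ↦ by measurability)
    (fun _ ↦ measurableSet_proposalGT t s) hp0 hp1 hsingle

theorem adversarial_threshold_mechanism_lower_bound_general [Finite ι] [Fintype κ]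
    (agent : ι → κ) (X : ι → Ω → ℝ) (hindep : iIndepFun X μ) (hint : ∀ e, Integrable (X e) μ)
    (hnonneg : ∀ e, 0 ≤ᵐ[μ] X e) {p t : ℝ} (hp : 0 ≤ p)
    (hagent : ∀ i, p ≤ μ.real {ω | ∀ e, agent e = i → X e ω < t})
    (hprod : p + ∏ i, μ.real {ω | ∀ e, agent e = i → X e ω < t} ≤ 1) :
    p * ∫ ω, ⨆ e, X e ω ∂μ ≤ ∫ ω, adversarialValue agent t (fun e ↦ X e ω) ∂μ := by
  have := hindep.isProbabilityMeasure
  have hX (e : ι) : AEMeasurable (X e) μ := (hint e).aemeasurable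
  have hnonneg' : ∀ᵐ ω ∂μ, ∀ e, 0 ≤ X e ω := ae_all_iff.2 hnonneg
  have hp1 : p ≤ 1 := (le_add_of_nonneg_right <|
    Finset.prod_nonneg fun _ _ ↦ measureReal_nonneg).trans hprod
  refine mul_integral_le_integral_of_mul_measureReal_lt_le hp
    (hnonneg'.mono fun ω hω ↦ Real.iSup_nonneg hω) (AEMeasurable.iSup hX)
    (hnonneg'.mono fun ω hω ↦ adversarialValue_nonneg hω)
    (integrable_adversarialValue hint hnonneg' agent t) fun s hs ↦ ?_
  simp only [lt_iSup_iff_exists_of_nonneg hs.le, lt_adversarialValue_iff, hs.not_gt, false_and,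
    or_false]
  rcases lt_or_ge s t with hst | hts
  · exact mul_measureReal_exists_gt_le_of_lt hX hindep hp hprod hst
  · exact mul_measureReal_exists_gt_le_of_ge hX hindep hp hp1 hagent hts

end Mechanism

/-- The adversarial value of the fully-symmetric threshold mechanism with threshold `t`:
each agent `i` holding an element of value `≥ t` proposes their least-valuable such element,
and the principal receives the largest proposed value (or `0` if there are none; recall
that in Mathlib `sSup ∅ = 0` for real numbers). -/
theorem adversarial_threshold_mechanism_lower_bound
    {Ω : Type*} [MeasureSpace Ω] [IsProbabilityMeasure (ℙ : Measure Ω)]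
    {ι : Type*} [Fintype ι] (k : ℕ) (hk : 1 ≤ k)
    (agent : ι → Fin k) (X : ι → Ω → ℝ)
    (hmeas : ∀ e, Measurable (X e))
    (hindep : iIndepFun X ℙ)
    (hint : ∀ e, Integrable (X e) ℙ)
    (hnonneg : ∀ e ω, 0 ≤ X e ω)
    (p : ℝ) (hp : 0 < p) (hroot : p ^ k + p = 1) (t : ℝ)
    (ht : ∀ i : Fin k,
      ℙ {ω | ∀ e, agent e = i → X e ω < t} = ENNReal.ofReal p) :
    p * ∫ ω, sSup {x | ∃ e, x = X e ω} ∂ℙ ≤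
      ∫ ω, sSup {v | ∃ i : Fin k, (∃ e, agent e = i ∧ t ≤ X e ω) ∧
        v = sInf {x | ∃ e, agent e = i ∧ t ≤ X e ω ∧ x = X e ω}} ∂ℙ := by
  have hreal (i : Fin k) : (ℙ : Measure Ω).real {ω | ∀ e, agent e = i → X e ω < t} = p := by
    rw [measureReal_def, ht i, ENNReal.toReal_ofReal hp.le]
  have hmax (ω : Ω) : sSup {x | ∃ e, x = X e ω} = ⨆ e, X e ω := by
    simp only [iSup, Set.range, eq_comm]
  simp only [hmax]
  exact adversarial_threshold_mechanism_lower_bound_general agent X hindep hint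
    (fun e ↦ .of_forall (hnonneg e)) hp.le (fun i ↦ (hreal i).ge)
    (by simp [hreal, add_comm p, hroot])
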